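/- arXiv:2408.09247 — 2 statements merged into one kernel-verified Lean document; each statement's English description precedes it below -/
import Mathlib

section
/- Let G be a loopless connected multigraph with ordered vertices v_0,...,v_n, let Δ be its Laplacian matrix, and let Δ̃ be obtained from Δ by deleting the row and column of v_0. Then for 1 ≤ i, j ≤ n, the (i,j) entry of Δ̃⁻¹ equals κ_{i,j}(G)/κ(G), where κ(G) is the number of spanning trees of G and κ_{i,j}(G) is the number of 2-component spanning forests of G in which one component contains v_0 and the other contains both v_i and v_j. -/
/-- Reachability in the multigraph with edge set `E`, endpoint map `ends`, using only the
edges in the subset `S`. -/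
def MGReach {V E : Type*} (ends : E → Sym2 V) (S : Finset E) (u v : V) : Prop :=
  Relation.ReflTransGen (fun a b => ∃ e ∈ S, ends e = s(a, b)) u v

/-- The number of spanning trees of the multigraph: subsets of edges of cardinality
`|V| - 1` for which every pair of vertices is connected. -/
noncomputable def MGKappa {V E : Type*} [Fintype V] [Fintype E] (ends : E → Sym2 V) : ℕ :=
  Nat.card {S : Finset E // S.card = Fintype.card V - 1 ∧ ∀ u v, MGReach ends S u v}

/-- The number of 2-component spanning forests in which one component contains `v0` and the
other contains both `vi` and `vj`. -/
noncomputable def MGKappaTwo {V E : Type*} [Fintype V] [Fintype E] (ends : E → Sym2 V)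
    (v0 vi vj : V) : ℕ :=
  Nat.card {S : Finset E // S.card = Fintype.card V - 2 ∧
    MGReach ends S vi vj ∧ ¬ MGReach ends S v0 vi ∧
    ∀ w, MGReach ends S w v0 ∨ MGReach ends S w vi}

/-!
Delete the row and column of a vertex `r`, fix a vertex `j` and write `F k` for the number of
two-component spanning forests separating `r` from both `k` and `j`. Up to the factor `κ(G)`, the
function `F` is the potential of the electrical network with unit resistances in which a unit
current enters at `j` and leaves at `r`, so it suffices to verify Kirchhoff's current law.

A forest `S` contributes to `F i - F k`, for an edge `e` joining `i` and `k`, only if `e` joins the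
two components of `S`. Then `S ∪ {e}` is a spanning tree, and the contribution is the flow through
`e`, directed away from `i`, of the unit current running from `j` to `r` inside that tree. Hence
the total flow out of `i ≠ r` is `1` for each spanning tree if `i = j`, and `0` otherwise.
-/

section Multigraph

variable {V E R : Type*}

namespace MGReach

variable {ends : E → Sym2 V} {S T : Finset E} {u v w : V}

theorem refl (u : V) : MGReach ends S u u :=
  Relation.ReflTransGen.refl

theorem trans (huv : MGReach ends S u v) (hvw : MGReach ends S v w) : MGReach ends S u w :=
  Relation.ReflTransGen.trans huv hvw

theorem symm (h : MGReach ends S u v) : MGReach ends S v u :=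
  Relation.reflTransGen_swap.1 <| Relation.ReflTransGen.mono
    (fun _ _ ⟨e, he, hab⟩ => ⟨e, he, hab.trans Sym2.eq_swap⟩) _ _ h

theorem comm : MGReach ends S u v ↔ MGReach ends S v u :=
  ⟨symm, symm⟩

theorem mono (hST : S ⊆ T) (h : MGReach ends S u v) : MGReach ends T u v :=
  Relation.ReflTransGen.mono (fun _ _ ⟨e, he, hab⟩ => ⟨e, hST he, hab⟩) _ _ h

theorem of_mem {e : E} (he : e ∈ S) (huv : ends e = s(u, v)) : MGReach ends S u v :=
  Relation.ReflTransGen.single ⟨e, he, huv⟩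

theorem iff_reachable_fromEdgeSet :
    MGReach ends S u v ↔ (SimpleGraph.fromEdgeSet (ends '' S)).Reachable u v := by
  rw [SimpleGraph.reachable_iff_reflTransGen]
  refine ⟨fun h => ?_, Relation.ReflTransGen.mono ?_ _ _⟩
  · refine Relation.reflTransGen_closed ?_ _ _ h
    rintro a b ⟨e, he, hab⟩
    by_cases hne : a = b
    · exact hne ▸ .refl
    · exact .single ((SimpleGraph.fromEdgeSet_adj _).2 ⟨⟨e, he, hab⟩, hne⟩)
  · exact fun a b hab => ((SimpleGraph.fromEdgeSet_adj _).1 hab).1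

theorem forall_iff_connected_fromEdgeSet [Nonempty V] :
    (∀ u v, MGReach ends S u v) ↔ (SimpleGraph.fromEdgeSet (ends '' S)).Connected := by
  simp only [SimpleGraph.connected_iff, SimpleGraph.Preconnected, iff_reachable_fromEdgeSet,
    and_iff_left ‹Nonempty V›]

theorem card_le_card_add_one [Fintype V] [Nonempty V] (h : ∀ u v, MGReach ends S u v) :
    Fintype.card V ≤ S.card + 1 := by
  have hedges : (SimpleGraph.fromEdgeSet (ends '' S)).edgeSet.ncard ≤ S.card :=
    calc (SimpleGraph.fromEdgeSet (ends '' S)).edgeSet.ncard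
      _ ≤ (ends '' S).ncard :=
          Set.ncard_le_ncard (by simp [SimpleGraph.edgeSet_fromEdgeSet]) (S.finite_toSet.image _)
      _ ≤ (S : Set E).ncard := Set.ncard_image_le S.finite_toSet
      _ = S.card := Set.ncard_coe_finset S
  have hvertices := (forall_iff_connected_fromEdgeSet.1 h).card_vert_le_card_edgeSet_add_one
  rw [Nat.card_eq_fintype_card, Nat.card_coe_set_eq] at hvertices
  lia

theorem reach_or_reach_of_insert [DecidableEq E] {e : E} {a b : V} (hab : ends e = s(a, b))
    (h : MGReach ends (insert e S) u a) : MGReach ends S u a ∨ MGReach ends S u b := by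
  induction h using Relation.ReflTransGen.head_induction_on with
  | refl => exact .inl (refl a)
  | @head x y hxy _ ih =>
    obtain ⟨f, hf, hxy⟩ := hxy
    rcases Finset.mem_insert.1 hf with rfl | hf
    · rcases Sym2.eq_iff.1 (hab.symm.trans hxy) with ⟨rfl, rfl⟩ | ⟨rfl, rfl⟩
      · exact .inl (refl _)
      · exact .inr (refl _)
    · exact ih.imp (of_mem hf hxy).trans (of_mem hf hxy).trans

theorem forall_insert_iff [DecidableEq E] {e : E} {a b : V} (hab : ends e = s(a, b)) :
    (∀ u v, MGReach ends (insert e S) u v) ↔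
      ∀ u, MGReach ends S u a ∨ MGReach ends S u b := by
  refine ⟨fun h u => reach_or_reach_of_insert hab (h u a), fun h => ?_⟩
  have hba : MGReach ends (insert e S) b a := (of_mem (Finset.mem_insert_self e S) hab).symm
  have hto_a (u : V) : MGReach ends (insert e S) u a :=
    (h u).elim (mono (Finset.subset_insert e S))
      fun hub => (hub.mono (Finset.subset_insert e S)).trans hba
  exact fun u v => (hto_a u).trans (hto_a v).symm

theorem exists_first_edge_at [DecidableEq V] (h : MGReach ends S u v) (huv : u ≠ v) :
    ∃ w, ∃ e ∈ S, ends e = s(w, v) ∧ MGReach ends {f ∈ S | v ∉ ends f} u w := by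
  induction h using Relation.ReflTransGen.head_induction_on with
  | refl => exact absurd rfl huv
  | @head a b hab _ ih =>
    obtain ⟨f, hf, hab⟩ := hab
    by_cases hbv : b = v
    · exact ⟨a, f, hf, hbv ▸ hab, refl a⟩
    · obtain ⟨w, e, he, hwv, hbw⟩ := ih hbv
      have hvf : v ∉ ends f := by
        simp [hab, huv.symm, Ne.symm hbv]
      exact ⟨w, e, he, hwv, (of_mem (Finset.mem_filter.2 ⟨hf, hvf⟩) hab).trans hbw⟩

open scoped Classical in
/-- The indicator of reachability, with values in `R`; it expresses counts of forests with
reachability conditions, and flows along trees, as sums. -/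
noncomputable def ind (R : Type*) [Zero R] [One R] (ends : E → Sym2 V) (S : Finset E) (u v : V) :
    R :=
  if MGReach ends S u v then 1 else 0

theorem ind_congr [Zero R] [One R] {u' v' : V}
    (h : MGReach ends S u v ↔ MGReach ends S u' v') : ind R ends S u v = ind R ends S u' v' := by
  classical exact if_congr h rfl rfl

theorem ind_eq_one [Zero R] [One R] (h : MGReach ends S u v) : ind R ends S u v = 1 :=
  if_pos h

theorem ind_eq_zero [Zero R] [One R] (h : ¬ MGReach ends S u v) : ind R ends S u v = 0 :=
  if_neg h

end MGReach

/-- `S` is the edge set of a spanning tree, in the encoding of `MGKappa`. -/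
def MGIsSpanningTree [Fintype V] (ends : E → Sym2 V) (S : Finset E) : Prop :=
  S.card = Fintype.card V - 1 ∧ ∀ u v, MGReach ends S u v

/-- `S` is the edge set of a spanning forest with two components, one containing `a` and the other
containing `b`, in the encoding of `MGKappaTwo`. -/
def MGIsTwoForest [Fintype V] (ends : E → Sym2 V) (a b : V) (S : Finset E) : Prop :=
  S.card = Fintype.card V - 2 ∧ ¬ MGReach ends S a b ∧
    ∀ w, MGReach ends S w a ∨ MGReach ends S w b

namespace MGIsTwoForest

variable [Fintype V] {ends : E → Sym2 V} {S : Finset E} {a b c d : V}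

theorem notMem {e : E} (h : MGIsTwoForest ends a b S) (hab : ends e = s(a, b)) : e ∉ S :=
  fun he => h.2.1 (.of_mem he hab)

theorem reach_or_reach_or_reach (h : MGIsTwoForest ends a b S) (u v w : V) :
    MGReach ends S u v ∨ MGReach ends S u w ∨ MGReach ends S v w := by
  rcases h.2.2 u with hu | hu <;> rcases h.2.2 v with hv | hv <;> rcases h.2.2 w with hw | hw
  all_goals
    first
    | exact .inl (hu.trans hv.symm)
    | exact .inr (.inl (hu.trans hw.symm))
    | exact .inr (.inr (hv.trans hw.symm))

theorem of_not_reach (h : MGIsTwoForest ends a b S) (hcd : ¬ MGReach ends S c d) :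
    MGIsTwoForest ends c d S :=
  ⟨h.1, hcd, fun w => (h.reach_or_reach_or_reach w c d).imp_right (·.resolve_right hcd)⟩

theorem not_reach_iff (h : MGIsTwoForest ends a b S) (w : V) :
    ¬ MGReach ends S w a ↔ MGReach ends S w b :=
  ⟨(h.2.2 w).resolve_left, fun hwb hwa => h.2.1 (hwa.symm.trans hwb)⟩

open MGReach in
theorem ind_sub_ind_eq [Ring R] (hab : MGIsTwoForest ends a b S)
    (hcd : MGIsTwoForest ends c d S) :
    ind R ends S c b - ind R ends S d b = ind R ends S b c - ind R ends S a c := by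
  have hda : MGReach ends S d b ↔ MGReach ends S a c := by
    rw [← hab.not_reach_iff, comm, ← hcd.not_reach_iff, not_not]
  rw [ind_congr comm, ind_congr hda]

end MGIsTwoForest

section Trees

variable [Fintype V] {ends : E → Sym2 V} {S T : Finset E}

theorem mgIsSpanningTree_insert_iff [DecidableEq E] {e : E} {a b : V} (hab : ends e = s(a, b))
    (he : e ∉ S) : MGIsSpanningTree ends (insert e S) ↔ MGIsTwoForest ends a b S := by
  have : Nonempty V := ⟨a⟩
  rw [MGIsSpanningTree, MGIsTwoForest, MGReach.forall_insert_iff hab,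
    Finset.card_insert_of_notMem he]
  constructor
  · rintro ⟨hcard, hreach⟩
    refine ⟨by lia, fun hreach_ab => ?_, hreach⟩
    have hto_a (u : V) : MGReach ends S u a := (hreach u).elim id (·.trans hreach_ab.symm)
    have := MGReach.card_le_card_add_one fun u v => (hto_a u).trans (hto_a v).symm
    lia
  · rintro ⟨hcard, hnot_reach, hreach⟩
    have hne : a ≠ b := fun h => hnot_reach (h ▸ .refl a)
    have : 1 < Fintype.card V := Fintype.one_lt_card_iff.2 ⟨a, b, hne⟩
    exact ⟨by lia, hreach⟩

theorem MGIsSpanningTree.isTwoForest_erase [DecidableEq E] (hT : MGIsSpanningTree ends T) {e : E}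
    (he : e ∈ T) {a b : V} (hab : ends e = s(a, b)) : MGIsTwoForest ends a b (T.erase e) :=
  (mgIsSpanningTree_insert_iff hab (Finset.notMem_erase e T)).1 (by rwa [Finset.insert_erase he])

theorem MGIsSpanningTree.existsUnique_separating_edge [DecidableEq E]
    (hT : MGIsSpanningTree ends T) {x i : V} (hxi : x ≠ i) :
    ∃! e, e ∈ T ∧ i ∈ ends e ∧ ¬ MGReach ends (T.erase e) x i := by
  classical
  obtain ⟨w, e, he, hwi, hxw⟩ := (hT.2 x i).exists_first_edge_at hxi
  have hxw_erase {f : E} (hf : i ∈ ends f) : MGReach ends (T.erase f) x w := by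
    refine hxw.mono fun g hg => ?_
    rw [Finset.mem_filter] at hg
    exact Finset.mem_erase.2 ⟨fun hgf => hg.2 (hgf ▸ hf), hg.1⟩
  have hie : i ∈ ends e := hwi ▸ Sym2.mem_mk_right w i
  refine ⟨e, ⟨he, hie, fun hreach => ?_⟩, fun f ⟨_, hif, hsep⟩ => ?_⟩
  · exact (hT.isTwoForest_erase he hwi).2.1 ((hxw_erase hie).symm.trans hreach)
  · by_contra hfe
    exact hsep ((hxw_erase hif).trans (.of_mem (Finset.mem_erase.2 ⟨Ne.symm hfe, he⟩) hwi))

open MGReach in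
theorem MGIsSpanningTree.sum_one_sub_ind [DecidableEq V] [DecidableEq E] [Ring R]
    (hT : MGIsSpanningTree ends T) (x i : V) :
    ∑ e ∈ T with i ∈ ends e, (1 - ind R ends (T.erase e) x i) = if i = x then 0 else 1 := by
  split_ifs with hix
  · exact Finset.sum_eq_zero fun e _ => by rw [hix, ind_eq_one (refl x), sub_self]
  · obtain ⟨e, ⟨he, hie, hsep⟩, hunique⟩ := hT.existsUnique_separating_edge (Ne.symm hix)
    rw [Finset.sum_eq_single_of_mem e (Finset.mem_filter.2 ⟨he, hie⟩),
      ind_eq_zero hsep, sub_zero]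
    intro f hf hfe
    have hreach : MGReach ends (T.erase f) x i := by
      by_contra hsep_f
      obtain ⟨hfT, hif⟩ := Finset.mem_filter.1 hf
      exact hfe (hunique f ⟨hfT, hif, hsep_f⟩)
    rw [ind_eq_one hreach, sub_self]

open MGReach in
theorem MGIsSpanningTree.sum_ind_sub_ind [DecidableEq V] [DecidableEq E] [Ring R]
    (hT : MGIsSpanningTree ends T) {i r : V} (hir : i ≠ r) (j : V) :
    ∑ e ∈ T with i ∈ ends e, (ind R ends (T.erase e) j i - ind R ends (T.erase e) r i) =
      if i = j then 1 else 0 :=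
  calc ∑ e ∈ T with i ∈ ends e, (ind R ends (T.erase e) j i - ind R ends (T.erase e) r i)
    _ = ∑ e ∈ T with i ∈ ends e, (1 - ind R ends (T.erase e) r i) -
        ∑ e ∈ T with i ∈ ends e, (1 - ind R ends (T.erase e) j i) := by
      rw [← Finset.sum_sub_distrib]
      exact Finset.sum_congr rfl fun e _ => (sub_sub_sub_cancel_left _ _ _).symm
    _ = if i = j then 1 else 0 := by
      rw [hT.sum_one_sub_ind, hT.sum_one_sub_ind, if_neg hir]
      split_ifs <;> simp

theorem exists_mgIsSpanningTree_subset [Nonempty V] (h : ∀ u v, MGReach ends S u v) :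
    ∃ T ⊆ S, MGIsSpanningTree ends T := by
  obtain ⟨H, hHS, hH⟩ :=
    (MGReach.forall_iff_connected_fromEdgeSet.1 h).exists_isTree_le
  have hsurj : Set.SurjOn ends S H.edgeSet := fun z hz => by
    have hz := SimpleGraph.edgeSet_mono hHS hz
    rw [SimpleGraph.edgeSet_fromEdgeSet] at hz
    exact hz.1
  obtain ⟨T, hTS, hT⟩ := hsurj.exists_bijOn_subset
  lift T to Finset E using S.finite_toSet.subset hTS
  refine ⟨T, Finset.coe_subset.1 hTS, ?_, ?_⟩
  · have hcard := (SimpleGraph.isTree_iff_connected_and_card.1 hH).2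
    rw [Nat.card_coe_set_eq, ← hT.ncard_eq, Set.ncard_coe_finset,
      Nat.card_eq_fintype_card] at hcard
    lia
  · rw [MGReach.forall_iff_connected_fromEdgeSet, hT.image_eq, SimpleGraph.fromEdgeSet_edgeSet]
    exact hH.connected

theorem mgIsTwoForest_and_reach_iff {r i j : V} :
    MGIsTwoForest ends r j S ∧ MGReach ends S i j ↔ S.card = Fintype.card V - 2 ∧
      MGReach ends S i j ∧ ¬ MGReach ends S r i ∧
        ∀ w, MGReach ends S w r ∨ MGReach ends S w i := by
  constructor
  · rintro ⟨h, hij⟩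
    have hri : ¬ MGReach ends S r i := fun hri => h.2.1 (hri.trans hij)
    exact ⟨h.1, hij, hri, (h.of_not_reach hri).2.2⟩
  · rintro ⟨hcard, hij, hri, hreach⟩
    have hrj : ¬ MGReach ends S r j := fun hrj => hri (hrj.trans hij.symm)
    exact ⟨⟨hcard, hrj, fun w => (hreach w).imp_right (·.trans hij)⟩, hij⟩

end Trees

section Counting

variable [Fintype V] [Fintype E]

theorem mgKappa_pos [Nonempty V] {ends : E → Sym2 V}
    (h : ∀ u v, MGReach ends Finset.univ u v) : 0 < MGKappa ends := by
  obtain ⟨T, -, hT⟩ := exists_mgIsSpanningTree_subset h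
  exact Nat.card_pos_iff.2 ⟨⟨T, hT⟩, inferInstance⟩

theorem mgKappaTwo_self_left (ends : E → Sym2 V) (r j : V) : MGKappaTwo ends r r j = 0 :=
  Nat.card_eq_zero.2 (.inl ⟨fun S => S.2.2.2.1 (.refl r)⟩)

open scoped Classical in
theorem mgKappa_eq_card_filter (ends : E → Sym2 V) :
    MGKappa ends = Finset.card {T : Finset E | MGIsSpanningTree ends T} :=
  Nat.subtype_card _ fun T => Finset.mem_filter_univ T

open scoped Classical in
theorem mgKappaTwo_cast_eq_sum_ind [Ring R] (ends : E → Sym2 V) (r i j : V) :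
    (MGKappaTwo ends r i j : R) =
      ∑ S with MGIsTwoForest ends r j S, MGReach.ind R ends S i j := by
  simp only [MGKappaTwo, ← mgIsTwoForest_and_reach_iff, MGReach.ind, Finset.sum_boole,
    Finset.filter_filter, Nat.card_eq_fintype_card, Fintype.card_subtype]

open MGReach in
open scoped Classical in
theorem sum_mgIsTwoForest_ind_sub_ind [Ring R] (ends : E → Sym2 V) (a b c d : V) :
    ∑ S with MGIsTwoForest ends a b S, (ind R ends S c b - ind R ends S d b) =
      ∑ S with MGIsTwoForest ends c d S, (ind R ends S b c - ind R ends S a c) := by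
  simp only [Finset.sum_filter]
  refine Finset.sum_congr rfl fun S _ => ?_
  split_ifs with hab hcd hcd
  · exact hab.ind_sub_ind_eq hcd
  · have hreach : MGReach ends S c d := not_not.1 (mt hab.of_not_reach hcd)
    rw [ind_congr ⟨hreach.symm.trans, hreach.trans⟩, sub_self]
  · have hreach : MGReach ends S a b := not_not.1 (mt hcd.of_not_reach hab)
    rw [ind_congr ⟨hreach.trans, hreach.symm.trans⟩, sub_self]
  · rfl

open scoped Classical in
theorem sum_mgIsTwoForest_eq_sum_erase {M : Type*} [AddCommMonoid M] {ends : E → Sym2 V} {e : E}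
    {a b : V} (hab : ends e = s(a, b)) (g : Finset E → M) :
    ∑ S with MGIsTwoForest ends a b S, g S =
      ∑ T with MGIsSpanningTree ends T ∧ e ∈ T, g (T.erase e) := by
  symm
  refine Finset.sum_nbij' (·.erase e) (insert e) ?_ ?_ ?_ ?_ (fun _ _ => rfl) <;>
    simp only [Finset.mem_filter_univ]
  · exact fun T hT => hT.1.isTwoForest_erase hT.2 hab
  · exact fun S hS => ⟨(mgIsSpanningTree_insert_iff hab (hS.notMem hab)).2 hS,
      Finset.mem_insert_self e S⟩
  · exact fun T hT => Finset.insert_erase hT.2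
  · exact fun S hS => Finset.erase_insert (hS.notMem hab)

open MGReach in
open scoped Classical in
theorem mgKappaTwo_sub_mgKappaTwo [Ring R] {ends : E → Sym2 V} {e : E} {i k : V}
    (hik : ends e = s(i, k)) (r j : V) :
    (MGKappaTwo ends r i j - MGKappaTwo ends r k j : R) =
      ∑ T with MGIsSpanningTree ends T ∧ e ∈ T,
        (ind R ends (T.erase e) j i - ind R ends (T.erase e) r i) := by
  rw [mgKappaTwo_cast_eq_sum_ind, mgKappaTwo_cast_eq_sum_ind, ← Finset.sum_sub_distrib,
    sum_mgIsTwoForest_ind_sub_ind, sum_mgIsTwoForest_eq_sum_erase hik]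

theorem sum_sum_ends_eq_mk [DecidableEq V] {M : Type*} [AddCommMonoid M] (ends : E → Sym2 V)
    (i : V) (g : E → M) :
    ∑ k, ∑ e with ends e = s(i, k), g e = ∑ e with i ∈ ends e, g e := by
  simp only [Finset.sum_filter]
  rw [Finset.sum_comm]
  refine Finset.sum_congr rfl fun e _ => ?_
  split_ifs with hi
  · obtain ⟨k, hk⟩ := hi
    simp only [hk, Sym2.congr_right]
    simp
  · exact Finset.sum_eq_zero fun k _ => if_neg fun hk : ends e = s(i, k) =>
      hi (hk ▸ Sym2.mem_mk_left i k)

open MGReach in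
theorem sum_sum_mgKappaTwo_sub_mgKappaTwo [DecidableEq V] [Ring R] (ends : E → Sym2 V) {i r : V}
    (hir : i ≠ r) (j : V) :
    ∑ k, ∑ e with ends e = s(i, k), (MGKappaTwo ends r i j - MGKappaTwo ends r k j : R) =
      if i = j then (MGKappa ends : R) else 0 := by
  classical
  let flow (e : E) (T : Finset E) : R := ind R ends (T.erase e) j i - ind R ends (T.erase e) r i
  calc ∑ k, ∑ e with ends e = s(i, k), (MGKappaTwo ends r i j - MGKappaTwo ends r k j : R)
    _ = ∑ k, ∑ e with ends e = s(i, k), ∑ T with MGIsSpanningTree ends T ∧ e ∈ T, flow e T :=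
      Finset.sum_congr rfl fun k _ => Finset.sum_congr rfl fun e he =>
        mgKappaTwo_sub_mgKappaTwo (Finset.mem_filter_univ e |>.1 he) r j
    _ = ∑ e with i ∈ ends e, ∑ T with MGIsSpanningTree ends T ∧ e ∈ T, flow e T :=
      sum_sum_ends_eq_mk ends i _
    _ = ∑ T with MGIsSpanningTree ends T, ∑ e ∈ T with i ∈ ends e, flow e T :=
      Finset.sum_comm' fun e T => by simp only [Finset.mem_filter, Finset.mem_univ]; tauto
    _ = ∑ T with MGIsSpanningTree ends T, if i = j then 1 else 0 :=
      Finset.sum_congr rfl fun T hT =>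
        MGIsSpanningTree.sum_ind_sub_ind (Finset.mem_filter_univ T |>.1 hT) hir j
    _ = if i = j then (MGKappa ends : R) else 0 := by
      rw [mgKappa_eq_card_filter]
      split_ifs <;> simp

end Counting

section Laplacian

open scoped Matrix

variable [DecidableEq V]

/-- The Laplacian matrix, valency minus adjacency. A loop adds `2` to the valency of its vertex and
to the corresponding diagonal entry of the adjacency matrix, so loops are left out. -/
noncomputable def mgLaplacian (R : Type*) [Ring R] (ends : E → Sym2 V) : Matrix V V R :=
  Matrix.of fun i k =>
    if i = k then (Nat.card {e : E // i ∈ ends e ∧ ¬ (ends e).IsDiag} : R)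
    else -(Nat.card {e : E // ends e = s(i, k)} : R)

variable [Fintype V] [Fintype E]

theorem mgLaplacian_mulVec_apply [Ring R] (ends : E → Sym2 V) (f : V → R) (i : V) :
    (mgLaplacian R ends *ᵥ f) i = ∑ k, ∑ e with ends e = s(i, k), (f i - f k) := by
  have hdiag {k : V} {e : E} (he : ends e = s(i, k)) : (ends e).IsDiag ↔ i = k := by
    rw [he, Sym2.mk_isDiag_iff]
  have hvalency : (Nat.card {e : E // i ∈ ends e ∧ ¬ (ends e).IsDiag} : R) * f i =
      ∑ k, ∑ e with ends e = s(i, k), if i = k then 0 else f i := by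
    calc (Nat.card {e : E // i ∈ ends e ∧ ¬ (ends e).IsDiag} : R) * f i
      _ = ∑ e with i ∈ ends e, if (ends e).IsDiag then 0 else f i := by
        simp [Finset.sum_ite, Finset.filter_filter, Fintype.card_subtype]
      _ = ∑ k, ∑ e with ends e = s(i, k), if (ends e).IsDiag then 0 else f i :=
        (sum_sum_ends_eq_mk ends i _).symm
      _ = ∑ k, ∑ e with ends e = s(i, k), if i = k then 0 else f i :=
        Finset.sum_congr rfl fun k _ => Finset.sum_congr rfl fun e he =>
          if_congr (hdiag (Finset.mem_filter_univ e |>.1 he)) rfl rfl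
  have hentry (k : V) : mgLaplacian R ends i k * f k =
      (if i = k then (Nat.card {e : E // i ∈ ends e ∧ ¬ (ends e).IsDiag} : R) * f i else 0) -
        ∑ e with ends e = s(i, k), if i = k then 0 else f k := by
    by_cases hik : i = k <;> simp [mgLaplacian, hik, Fintype.card_subtype]
  calc (mgLaplacian R ends *ᵥ f) i
    _ = ∑ k, ∑ e with ends e = s(i, k),
        ((if i = k then 0 else f i) - if i = k then 0 else f k) := by
      simp only [Matrix.mulVec, dotProduct, hentry, Finset.sum_sub_distrib, Finset.sum_ite_eq,
        Finset.mem_univ, if_true, hvalency]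
    _ = ∑ k, ∑ e with ends e = s(i, k), (f i - f k) := by
      refine Finset.sum_congr rfl fun k _ => Finset.sum_congr rfl fun e _ => ?_
      split_ifs with hik <;> simp [hik]

theorem mgLaplacian_mulVec_mgKappaTwo [Ring R] (ends : E → Sym2 V) {i r : V} (hir : i ≠ r)
    (j : V) :
    (mgLaplacian R ends *ᵥ fun k => (MGKappaTwo ends r k j : R)) i =
      if i = j then (MGKappa ends : R) else 0 := by
  rw [mgLaplacian_mulVec_apply, sum_sum_mgKappaTwo_sub_mgKappaTwo ends hir]

theorem mgLaplacian_toSquareBlockProp_mul_mgKappaTwo [Ring R] (ends : E → Sym2 V) (r : V) :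
    (mgLaplacian R ends).toSquareBlockProp (· ≠ r) *
        Matrix.of (fun i j : {v // v ≠ r} => (MGKappaTwo ends r i j : R)) =
      (MGKappa ends : R) • 1 := by
  ext i j
  have hrow := mgLaplacian_mulVec_mgKappaTwo (R := R) ends i.2 j
  rw [Matrix.mulVec, dotProduct, Fintype.sum_eq_add_sum_subtype_ne _ r, mgKappaTwo_self_left,
    Nat.cast_zero, mul_zero, zero_add] at hrow
  simpa [Matrix.mul_apply, Matrix.toSquareBlockProp_def, Matrix.one_apply, Subtype.ext_iff]
    using hrow

theorem laplacian_inverse_entries_general {K : Type*} [Field K] (ends : E → Sym2 V)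
    (hκ : (MGKappa ends : K) ≠ 0) (r : V) (i j : {v // v ≠ r}) :
    ((mgLaplacian K ends).toSquareBlockProp (· ≠ r))⁻¹ i j =
      (MGKappaTwo ends r i j : K) / (MGKappa ends : K) := by
  have hinv : (mgLaplacian K ends).toSquareBlockProp (· ≠ r) *
      (MGKappa ends : K)⁻¹ • Matrix.of (fun i j : {v // v ≠ r} => (MGKappaTwo ends r i j : K)) =
        1 := by
    rw [Matrix.mul_smul, mgLaplacian_toSquareBlockProp_mul_mgKappaTwo, inv_smul_smul₀ hκ]
  rw [Matrix.inv_eq_right_inv hinv, Matrix.smul_apply, Matrix.of_apply, smul_eq_mul, mul_comm,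
    div_eq_mul_inv]

end Laplacian

end Multigraph

theorem laplacian_inverse_entries (n : ℕ) (E : Type*) [Fintype E]
    (ends : E → Sym2 (Fin (n + 1)))
    (hloopless : ∀ e, ¬ (ends e).IsDiag)
    (hconn : ∀ u v : Fin (n + 1), MGReach ends Finset.univ u v)
    (Δ : Matrix (Fin (n + 1)) (Fin (n + 1)) ℚ)
    (hΔ : ∀ i j, Δ i j =
      if i = j then (Nat.card {e : E // i ∈ ends e} : ℚ)
      else -(Nat.card {e : E // ends e = s(i, j)} : ℚ))
    (Δt : Matrix (Fin n) (Fin n) ℚ)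
    (hΔt : ∀ i j, Δt i j = Δ i.succ j.succ)
    (i j : Fin n) :
    Δt⁻¹ i j = (MGKappaTwo ends 0 i.succ j.succ : ℚ) / (MGKappa ends : ℚ) := by
  have hκ : (MGKappa ends : ℚ) ≠ 0 := Nat.cast_ne_zero.2 (mgKappa_pos hconn).ne'
  have hminor : Δt = ((mgLaplacian ℚ ends).toSquareBlockProp (· ≠ 0)).submatrix
      (finSuccAboveEquiv 0) (finSuccAboveEquiv 0) := by
    ext a b
    simp [hΔt, hΔ, hloopless, mgLaplacian, finSuccAboveEquiv_apply, Matrix.toSquareBlockProp_def]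
  rw [hminor, Matrix.inv_submatrix_equiv, Matrix.submatrix_apply,
    laplacian_inverse_entries_general ends hκ]
  simp only [finSuccAboveEquiv_apply, Fin.succAbove_zero]
end

section
/- For every n ≥ 6, there is no element D of 2A (the set of sums of two elements of A) in ℤ/F_{2n}ℤ such that D - x lies in 2A for every x in A, where A = {F_k·F_{2n-k} mod F_{2n} : 0 ≤ k ≤ n}. -/
/-!
The statement says that no divisor `(0) + (p) + (q)` on the strip graph `G_n`, with vertices
`0, …, n` and edges `i ~ j` for `0 < |i - j| ≤ 2`, moves in a linear system of positive rank.

Firing vertices shows that `(k) - (0) ∼ s_k ((1) - (0))` with `s_k = (-1) ^ (k + 1) F_k ^ 2`, and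
that `F_{2n} ((1) - (0)) ∼ 0`. Since `F_k F_{2n-k} ≡ F_{2n-1} s_k` modulo `F_{2n}` and `F_{2n-1}`
is prime to `F_{2n}`, two sums of three elements of `A` agree only if the corresponding divisors
are linearly equivalent.

Linear systems are controlled by Dhar's burning argument. If an effective divisor of positive rank
has no chip at `i` and `i + 1`, then the fire lit there must be stopped on one side, which takes
two chips at the end of the strip, or three chips on two consecutive vertices. As `n ≥ 6`, one of
the pairs `{1, 2}`, `{3, 4}`, `{5, 6}` carries no chip of `(0) + (p) + (q)`, which leaves the cases
`p = 0`, `q = 0`, `p = q = 1` and `p = q = n`. In each of them a few firings lead to an equivalent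
divisor with a gap from which nothing stops the fire.
-/

open Finset

section ChipFiring

variable {V : Type*} [Fintype V] [DecidableEq V] (G : SimpleGraph V) [DecidableRel G.Adj]

/-- The Picard group of a graph: divisors modulo the principal ones, which are the values of the
Laplacian. -/
abbrev PicardGroup : Type _ := (V → ℤ) ⧸ LinearMap.range (G.lapMatrix ℤ).mulVecLin

/-- The linear equivalence class of a divisor. -/
def divisorClass : (V → ℤ) →ₗ[ℤ] PicardGroup G := Submodule.mkQ _

/-- The Baker–Norine rank of a divisor class is at least one: for every vertex, the class has an
effective representative with a chip on that vertex. The gonality of a connected graph is the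
least degree of such a class. -/
def HasPositiveRank (c : PicardGroup G) : Prop :=
  ∀ v, ∃ E : V → ℤ, 0 ≤ E ∧ 0 < E v ∧ divisorClass G E = c

/-- All vertices of `U` can fire simultaneously without any of them going into debt. -/
def CanFire (D : V → ℤ) (U : Finset V) : Prop :=
  ∀ v ∈ U, (#(G.neighborFinset v \ U) : ℤ) ≤ D v

variable {G} {D : V → ℤ} {U : Finset V}

lemma divisorClass_eq_iff {E : V → ℤ} :
    divisorClass G D = divisorClass G E ↔
      ∃ f : V → ℤ, ∀ v, D v - E v = ∑ w ∈ G.neighborFinset v, (f v - f w) := by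
  simp [divisorClass, Submodule.Quotient.eq, funext_iff, SimpleGraph.lapMatrix_mulVec_apply,
    sum_sub_distrib, eq_comm]

lemma degree_nsmul_divisorClass_single (v : V) :
    G.degree v • divisorClass G (Pi.single v 1) =
      ∑ w ∈ G.neighborFinset v, divisorClass G (Pi.single w 1) := by
  rw [← map_nsmul, ← map_sum, divisorClass_eq_iff]
  refine ⟨Pi.single v 1, fun u => ?_⟩
  by_cases huv : u = v
  · subst huv
    simp [Pi.single_apply]
  · simp [Pi.single_apply, huv, G.adj_comm]

lemma HasPositiveRank.exists_canFire (h : HasPositiveRank G (divisorClass G D)) {v : V}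
    (hv : D v ≤ 0) : ∃ U : Finset V, U.Nonempty ∧ v ∉ U ∧ CanFire G D U := by
  obtain ⟨E, hE, hEv, hDE⟩ := h v
  obtain ⟨f, hf⟩ := divisorClass_eq_iff.1 hDE.symm
  obtain ⟨u, -, hu⟩ := exists_max_image univ f ⟨v, mem_univ v⟩
  have hmax {w : V} (hw : f w = f u) (x : V) : 0 ≤ f w - f x := by grind
  refine ⟨univ.filter (f · = f u), ⟨u, by simp⟩, fun hvu => ?_, fun w hw => ?_⟩
  · have := sum_nonneg fun x (_ : x ∈ G.neighborFinset v) => hmax (mem_filter.1 hvu).2 x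
    linarith [hf v]
  · have hw : f w = f u := (mem_filter.1 hw).2
    calc (#(G.neighborFinset w \ univ.filter (f · = f u)) : ℤ)
        = ∑ x ∈ G.neighborFinset w \ univ.filter (f · = f u), 1 := by simp
      _ ≤ ∑ x ∈ G.neighborFinset w \ univ.filter (f · = f u), (f w - f x) :=
        sum_le_sum fun x hx => by grind
      _ ≤ ∑ x ∈ G.neighborFinset w, (f w - f x) :=
        sum_le_sum_of_subset_of_nonneg sdiff_subset fun x _ _ => hmax hw x
      _ = D w - E w := (hf w).symm
      _ ≤ D w := sub_le_self _ (hE w)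

lemma CanFire.card_le (h : CanFire G D U) {u : V} (hu : u ∈ U) {s : Finset V}
    (hs : ∀ w ∈ s, G.Adj u w ∧ w ∉ U) : (#s : ℤ) ≤ D u := by
  refine le_trans ?_ (h u hu)
  exact_mod_cast card_le_card fun w hw => by simpa using hs w hw

lemma CanFire.exists_blocking (h : CanFire G D U) (hD : 0 ≤ D) {c : ℕ → V} {m : ℕ}
    (hinj : Set.InjOn c (Set.Iic m))
    (hadj₁ : ∀ j, j + 1 ≤ m → G.Adj (c j) (c (j + 1)))
    (hadj₂ : ∀ j, j + 2 ≤ m → G.Adj (c j) (c (j + 2)))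
    (h₀ : c 0 ∉ U) (h₁ : c 1 ∉ U) {j : ℕ} (hj : j ≤ m) (hjU : c j ∈ U) :
    ∃ k, 2 ≤ k ∧ k ≤ m ∧ 2 ≤ D (c k) ∧ (k = m ∨ 3 ≤ D (c k) + D (c (k + 1))) := by
  have hex : ∃ k, k ≤ m ∧ c k ∈ U := ⟨j, hj, hjU⟩
  obtain ⟨k, ⟨hkm, hkU⟩, hmin⟩ : ∃ k, (k ≤ m ∧ c k ∈ U) ∧ ∀ l < k, c l ∉ U :=
    ⟨Nat.find hex, Nat.find_spec hex, fun l hl hlU =>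
      Nat.find_min hex hl ⟨hl.le.trans (Nat.find_spec hex).1, hlU⟩⟩
  -- `c k`, the first vertex of the path in `U`, loses a chip to each of its two predecessors, and
  -- unless `k = m` a third chip moves from `c k` to `c (k + 1)` or from `c (k + 1)` to `c (k - 1)`.
  obtain ⟨k, rfl⟩ : ∃ l, k = l + 2 := by
    rcases k with _ | _ | k
    exacts [absurd hkU h₀, absurd hkU h₁, ⟨k, rfl⟩]
  have hne {a b : ℕ} (ha : a ≤ m) (hb : b ≤ m) (hab : a ≠ b) : c a ≠ c b :=
    fun hc => hab (hinj ha hb hc)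
  have htwo : 2 ≤ D (c (k + 2)) := by
    have := h.card_le hkU (s := {c k, c (k + 1)}) (by
      simp [hmin, (hadj₁ (k + 1) hkm).symm, (hadj₂ k hkm).symm])
    rwa [card_pair (hne (by omega) (by omega) (by omega))] at this
  refine ⟨k + 2, by omega, hkm, htwo, or_iff_not_imp_left.2 fun hkm' => ?_⟩
  have hk : k + 2 + 1 ≤ m := by omega
  by_cases hU : c (k + 2 + 1) ∈ U
  · have := h.card_le hU (s := {c (k + 1)}) (by
      simp [hmin, (hadj₂ (k + 1) hk).symm])
    rw [card_singleton] at this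
    omega
  · have := h.card_le hkU (s := {c k, c (k + 1), c (k + 2 + 1)}) (by
      simp [hmin, (hadj₁ (k + 1) hkm).symm, (hadj₂ k hkm).symm, hadj₁ (k + 2) hk, hU])
    rw [card_eq_three.2 ⟨_, _, _, hne (by omega) (by omega) (by omega),
      hne (by omega) (by omega) (by omega), hne (by omega) (by omega) (by omega), rfl⟩] at this
    have : 0 ≤ D (c (k + 2 + 1)) := hD _
    omega

end ChipFiring

section Strip

/-- The strip graph `G_n`: vertices at distance at most two on a path with `n + 1` vertices are
adjacent. -/
def strip (n : ℕ) : SimpleGraph (Fin (n + 1)) where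
  Adj i j := i ≠ j ∧ (i : ℕ) ≤ j + 2 ∧ (j : ℕ) ≤ i + 2
  symm := ⟨fun _ _ h => ⟨h.1.symm, h.2.2, h.2.1⟩⟩
  loopless := ⟨fun _ h => h.1 rfl⟩

instance (n : ℕ) : DecidableRel (strip n).Adj := fun i j =>
  inferInstanceAs (Decidable (i ≠ j ∧ (i : ℕ) ≤ j + 2 ∧ (j : ℕ) ≤ i + 2))

/-- The class on the strip of the divisor with coefficients `d 0, …, d n`. Indexing by `ℕ` makes
shifted indices easy to write; values of `d` beyond `n` are ignored. -/
def stripClass (n : ℕ) : (ℕ → ℤ) →ₗ[ℤ] PicardGroup (strip n) :=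
  divisorClass (strip n) ∘ₗ LinearMap.funLeft ℤ ℤ Fin.val

/-- The class of the divisor consisting of the vertex `k`, which is `0` if `n < k`. -/
def vertexClass (n k : ℕ) : PicardGroup (strip n) :=
  stripClass n (Pi.single k 1)

variable {n : ℕ}

lemma strip_adj {i j : Fin (n + 1)} :
    (strip n).Adj i j ↔ (i : ℕ) ≠ j ∧ (i : ℕ) ≤ j + 2 ∧ (j : ℕ) ≤ i + 2 := by
  simp [strip, Fin.ext_iff]

lemma clamp_eq_clamp_iff {a b : ℕ} (ha : a ≤ n) (hb : b ≤ n) :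
    Fin.clamp a n = Fin.clamp b n ↔ a = b := by
  simp [Fin.ext_iff, ha, hb]

lemma clamp_eq_of_eq_val {k : ℕ} {v : Fin (n + 1)} (h : k = v) : Fin.clamp k n = v := by
  simp [Fin.ext_iff, h, v.is_le]

lemma strip_adj_clamp {a b : ℕ} (ha : a ≤ n) (hb : b ≤ n) (hne : a ≠ b) (hab : a ≤ b + 2)
    (hba : b ≤ a + 2) : (strip n).Adj (Fin.clamp a n) (Fin.clamp b n) := by
  simpa [strip_adj, ha, hb] using ⟨hne, hab, hba⟩

lemma divisorClass_single (v : Fin (n + 1)) :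
    divisorClass (strip n) (Pi.single v 1) = vertexClass n v := by
  refine congrArg (divisorClass (strip n)) (funext fun w => ?_)
  simp [LinearMap.funLeft_apply, Pi.single_apply, Fin.ext_iff]

lemma stripClass_eq_sum (d : ℕ → ℤ) :
    stripClass n d = ∑ k ∈ range (n + 1), d k • vertexClass n k := by
  simp only [vertexClass, ← map_smul, ← map_sum]
  refine congrArg (divisorClass (strip n)) (funext fun v => ?_)
  simp [LinearMap.funLeft_apply, Pi.single_apply, Nat.lt_succ_of_le v.is_le]

lemma card_nsmul_vertexClass {k : ℕ} (hk : k ≤ n) {s : Finset ℕ}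
    (hs : ∀ j, j ∈ s ↔ j ≤ n ∧ k ≠ j ∧ k ≤ j + 2 ∧ j ≤ k + 2) :
    #s • vertexClass n k = ∑ j ∈ s, vertexClass n j := by
  let v : Fin (n + 1) := ⟨k, Nat.lt_succ_of_le hk⟩
  have hmap : s = ((strip n).neighborFinset v).map Fin.valEmbedding := by
    ext j
    simp only [hs, mem_map, SimpleGraph.mem_neighborFinset, strip_adj, Fin.valEmbedding_apply]
    exact ⟨fun ⟨hj, h⟩ => ⟨⟨j, Nat.lt_succ_of_le hj⟩, h, rfl⟩,
      by rintro ⟨i, h, rfl⟩; exact ⟨Fin.is_le i, h⟩⟩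
  simpa [hmap, sum_map, divisorClass_single, v] using
    degree_nsmul_divisorClass_single (G := strip n) v

lemma two_nsmul_vertexClass_zero (hn : 2 ≤ n) :
    2 • vertexClass n 0 = vertexClass n 1 + vertexClass n 2 := by
  simpa using card_nsmul_vertexClass (n := n) (k := 0) (s := {1, 2}) (by omega) (by grind)

lemma two_nsmul_vertexClass_last (hn : 2 ≤ n) :
    2 • vertexClass n n = vertexClass n (n - 2) + vertexClass n (n - 1) := by
  have h := card_nsmul_vertexClass (n := n) (k := n) (s := {n - 2, n - 1}) le_rfl (by grind)
  rwa [card_pair (by omega), sum_pair (by omega)] at h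

lemma vertexClass_add_two_nsmul_succ {k : ℕ} (hk : k + 3 ≤ n) :
    vertexClass n k + 2 • vertexClass n (k + 1) =
      2 • vertexClass n (k + 2) + vertexClass n (k + 3) := by
  induction k with
  | zero =>
    have h₁ : 3 • vertexClass n 1 = vertexClass n 0 + (vertexClass n 2 + vertexClass n 3) := by
      simpa using card_nsmul_vertexClass (n := n) (k := 1) (s := {0, 2, 3}) (by omega) (by grind)
    grind [two_nsmul_vertexClass_zero (n := n) (by omega)]
  | succ k ih =>
    have hk₂ : 4 • vertexClass n (k + 2) = vertexClass n k +
        (vertexClass n (k + 1) + (vertexClass n (k + 3) + vertexClass n (k + 4))) := by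
      simpa [sum_insert] using card_nsmul_vertexClass (n := n) (k := k + 2)
        (s := {k, k + 1, k + 3, k + 4}) (by omega) (by grind)
    grind [ih (by omega)]

lemma HasPositiveRank.exists_blocking {d : ℕ → ℤ} (h : HasPositiveRank (strip n) (stripClass n d))
    (hd : 0 ≤ d) {i : ℕ} (hi : i + 1 ≤ n) (hi₀ : d i = 0) (hi₁ : d (i + 1) = 0) :
    (∃ k ≤ n, i + 2 ≤ k ∧ 2 ≤ d k ∧ (k = n ∨ 3 ≤ d k + d (k + 1))) ∨
      ∃ k < i, 2 ≤ d k ∧ (k = 0 ∨ 3 ≤ d k + d (k - 1)) := by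
  set D := LinearMap.funLeft ℤ ℤ (Fin.val : Fin (n + 1) → ℕ) d
  have hD : 0 ≤ D := fun _ => hd _
  have hDd {k : ℕ} (hk : k ≤ n) : D (Fin.clamp k n) = d k := by
    simp [D, LinearMap.funLeft_apply, hk]
  obtain ⟨U, ⟨u, hu⟩, hiU, hU⟩ := HasPositiveRank.exists_canFire (D := D) h (v := Fin.clamp i n)
    (by grind)
  have hiU' : Fin.clamp (i + 1) n ∉ U := fun hmem => by
    have := hU.card_le hmem (s := {Fin.clamp i n})
      (by simpa [hiU] using strip_adj_clamp hi (by omega) (by omega) (by omega) (by omega))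
    rw [hDd hi, card_singleton] at this
    omega
  rcases le_or_gt i u with hiu | hiu
  · left
    obtain ⟨k, hk, hkm, h₂, h₃⟩ := hU.exists_blocking hD (c := fun j => Fin.clamp (i + j) n)
      (m := n - i) (j := u - i)
      (fun a ha b hb hab => by grind [clamp_eq_clamp_iff])
      (fun j hj => by apply strip_adj_clamp <;> omega)
      (fun j hj => by apply strip_adj_clamp <;> omega)
      hiU hiU' (by omega) (by rwa [clamp_eq_of_eq_val (v := u) (by omega)])
    exact ⟨i + k, by grind⟩
  · right
    obtain ⟨k, hk, hkm, h₂, h₃⟩ := hU.exists_blocking hD (c := fun j => Fin.clamp (i + 1 - j) n)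
      (m := i + 1) (j := i + 1 - u)
      (fun a ha b hb hab => by grind [clamp_eq_clamp_iff])
      (fun j hj => by apply strip_adj_clamp <;> omega)
      (fun j hj => by apply strip_adj_clamp <;> omega)
      hiU' hiU (by omega) (by rwa [clamp_eq_of_eq_val (v := u) (by omega)])
    exact ⟨i + 1 - k, by grind⟩

end Strip

section ThreeChips

/-- The divisor `(p) + (q) + (r)`. -/
def chips (p q r : ℕ) : ℕ → ℤ := Pi.single p 1 + Pi.single q 1 + Pi.single r 1

variable {n : ℕ}

lemma chips_apply (p q r k : ℕ) : chips p q r k =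
    (if k = p then 1 else 0) + (if k = q then 1 else 0) + (if k = r then 1 else 0) := by
  simp [chips, Pi.single_apply]

lemma chips_nonneg (p q r : ℕ) : 0 ≤ chips p q r := fun k => by
  rw [chips_apply]
  positivity

lemma stripClass_chips (p q r : ℕ) :
    stripClass n (chips p q r) = vertexClass n p + vertexClass n q + vertexClass n r := by
  simp only [chips, vertexClass, map_add]

lemma sum_chips_smul {M : Type*} [AddCommGroup M] (g : ℕ → M) {p q r : ℕ} (hp : p ≤ n)
    (hq : q ≤ n) (hr : r ≤ n) :
    ∑ k ∈ range (n + 1), chips p q r k • g k = g p + g q + g r := by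
  simp [chips_apply, add_smul, sum_add_distrib, ite_smul, hp, hq, hr]

lemma not_hasPositiveRank_chips_two_two_three (hn : 5 ≤ n) :
    ¬ HasPositiveRank (strip n) (stripClass n (chips 2 2 3)) := fun h => by
  have := h.exists_blocking (chips_nonneg _ _ _) (i := 4) hn
    (by simp [chips_apply]) (by simp [chips_apply])
  grind [chips_apply]

lemma not_hasPositiveRank_chips_three_three_four (hn : 6 ≤ n) :
    ¬ HasPositiveRank (strip n) (stripClass n (chips 3 3 4)) := fun h => by
  have := h.exists_blocking (chips_nonneg _ _ _) (i := 5) hn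
    (by simp [chips_apply]) (by simp [chips_apply])
  grind [chips_apply]

lemma not_hasPositiveRank_chips_one_two (hn : 6 ≤ n) (q : ℕ) :
    ¬ HasPositiveRank (strip n) (stripClass n (chips 1 2 q)) := fun h => by
  obtain ⟨i, hi, hqi⟩ : ∃ i, (i = 3 ∨ i = 5) ∧ q ≠ i ∧ q ≠ i + 1 := by
    by_cases q ≤ 4
    · exact ⟨5, by omega⟩
    · exact ⟨3, by omega⟩
  have := h.exists_blocking (chips_nonneg _ _ _) (i := i) (by omega)
    (by grind [chips_apply]) (by grind [chips_apply])
  obtain rfl : q = 2 := by grind [chips_apply]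
  have hclass : stripClass n (chips 1 2 2) = stripClass n (chips 3 3 4) := by
    grind [stripClass_chips, vertexClass_add_two_nsmul_succ (n := n) (k := 1) (by omega)]
  exact not_hasPositiveRank_chips_three_three_four hn (hclass ▸ h)

lemma not_hasPositiveRank_chips_zero_sub_two_sub_one (hn : 5 ≤ n) :
    ¬ HasPositiveRank (strip n) (stripClass n (chips 0 (n - 2) (n - 1))) := fun h => by
  have := h.exists_blocking (chips_nonneg _ _ _) (i := 1) (by omega)
    (by grind [chips_apply]) (by grind [chips_apply])
  grind [chips_apply]

lemma eq_of_hasPositiveRank_chips_zero (hn : 6 ≤ n) {p q : ℕ}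
    (h : HasPositiveRank (strip n) (stripClass n (chips 0 p q))) :
    p = 0 ∨ q = 0 ∨ (p = 1 ∧ q = 1) ∨ (p = n ∧ q = n) := by
  obtain ⟨i, hi, hpi, hqi⟩ : ∃ i, (i = 1 ∨ i = 3 ∨ i = 5) ∧
      (p ≠ i ∧ p ≠ i + 1) ∧ (q ≠ i ∧ q ≠ i + 1) := by
    by_contra! hcon
    have h₁ := hcon 1
    have h₃ := hcon 3
    have h₅ := hcon 5
    omega
  rcases h.exists_blocking (chips_nonneg _ _ _) (i := i) (by omega) (by grind [chips_apply])
    (by grind [chips_apply]) with ⟨k, hk⟩ | ⟨k, hk⟩ <;>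
  simp only [chips_apply] at hk <;> grind

theorem not_hasPositiveRank_chips_zero (hn : 6 ≤ n) (p q : ℕ) :
    ¬ HasPositiveRank (strip n) (stripClass n (chips 0 p q)) := fun h => by
  have hzero := two_nsmul_vertexClass_zero (n := n) (by omega)
  obtain rfl | rfl | ⟨rfl, rfl⟩ | ⟨hp, hq⟩ := eq_of_hasPositiveRank_chips_zero hn h
  · have hclass : stripClass n (chips 0 0 q) = stripClass n (chips 1 2 q) := by
      grind [stripClass_chips]
    exact not_hasPositiveRank_chips_one_two hn q (hclass ▸ h)
  · have hclass : stripClass n (chips 0 p 0) = stripClass n (chips 1 2 p) := by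
      grind [stripClass_chips]
    exact not_hasPositiveRank_chips_one_two hn p (hclass ▸ h)
  · have hclass : stripClass n (chips 0 1 1) = stripClass n (chips 2 2 3) := by
      grind [stripClass_chips, vertexClass_add_two_nsmul_succ (n := n) (k := 0) (by omega)]
    exact not_hasPositiveRank_chips_two_two_three (by omega) (hclass ▸ h)
  · have hclass : stripClass n (chips 0 p q) = stripClass n (chips 0 (n - 2) (n - 1)) := by
      rw [hp, hq]
      grind [stripClass_chips, two_nsmul_vertexClass_last (n := n) (by omega)]
    exact not_hasPositiveRank_chips_zero_sub_two_sub_one (by omega) (hclass ▸ h)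

end ThreeChips

section Fibonacci

/-- The multiple of `(1) - (0)` to which `(k) - (0)` is linearly equivalent on every strip
containing the vertices `0, …, k`. -/
def signedFibSq (k : ℕ) : ℤ := (-1) ^ (k + 1) * Nat.fib k ^ 2

lemma signedFibSq_add_three (k : ℕ) :
    signedFibSq (k + 3) = signedFibSq k + 2 * signedFibSq (k + 1) - 2 * signedFibSq (k + 2) := by
  simp only [signedFibSq, Nat.fib_add_two]
  push_cast
  ring

lemma fib_two_mul_eq_signedFibSq (k : ℕ) :
    (Nat.fib (2 * (k + 2)) : ℤ) =
      (-1) ^ (k + 1) * (2 * signedFibSq (k + 2) - signedFibSq k - signedFibSq (k + 1)) := by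
  have hsign : ((-1 : ℤ) ^ k) ^ 2 = 1 := by rw [pow_right_comm, neg_one_sq, one_pow]
  have hfib : (Nat.fib (2 * (k + 2)) : ℤ) =
      Nat.fib (k + 2) * (2 * Nat.fib (k + 1) + Nat.fib (k + 2)) :=
    mod_cast Nat.fib_two_mul_add_two (k + 1)
  rw [hfib]
  simp only [signedFibSq, Nat.fib_add_two, Nat.cast_add]
  linear_combination (-(Nat.fib k + Nat.fib (k + 1)) * (Nat.fib k + 3 * Nat.fib (k + 1)) : ℤ) *
    hsign

lemma fib_mul_fib_sub_modEq {k m : ℕ} (hk : k ≤ m) :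
    (Nat.fib k * Nat.fib (m - k) : ℤ) ≡ Int.fib (m - 1) * signedFibSq k [ZMOD Nat.fib m] := by
  have hadd := Int.fib_add m (-k)
  rw [Int.fib_neg_natCast, ← sub_eq_add_neg, ← Nat.cast_sub hk, Int.fib_natCast,
    Int.fib_natCast] at hadd
  rw [hadd, signedFibSq]
  refine Int.modEq_iff_dvd.2 ⟨-Nat.fib k * Int.fib (-k + 1), ?_⟩
  ring

lemma isCoprime_fib_fib_sub_one (m : ℤ) : IsCoprime (Int.fib m) (Int.fib (m - 1)) := by
  rw [Int.isCoprime_iff_gcd_eq_one, Int.gcd_fib]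
  simp

end Fibonacci

section FibResidue

/-- The element `F_k F_{2n-k}` of the set `A`, as a residue modulo `F_{2n}`. -/
def fibResidue (n k : ℕ) : ZMod (Nat.fib (2 * n)) :=
  (Nat.fib k * Nat.fib (2 * n - k) : ℕ)

variable {n : ℕ}

lemma fibResidue_zero : fibResidue n 0 = 0 := by
  simp [fibResidue]

lemma vertexClass_sub_zero (hn : 2 ≤ n) : ∀ {k : ℕ}, k ≤ n →
    vertexClass n k - vertexClass n 0 = signedFibSq k • (vertexClass n 1 - vertexClass n 0)
  | 0, _ => by simp [signedFibSq]
  | 1, _ => by simp [signedFibSq]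
  | 2, _ => by
    have hs : signedFibSq 2 = -1 := by simp [signedFibSq]
    rw [hs]
    grind [two_nsmul_vertexClass_zero hn]
  | k + 3, hk => by
    have h₀ := vertexClass_sub_zero hn (k := k) (by omega)
    have h₁ := vertexClass_sub_zero hn (k := k + 1) (by omega)
    have h₂ := vertexClass_sub_zero hn (k := k + 2) (by omega)
    simp only [signedFibSq_add_three, sub_smul, add_smul, mul_smul, ← h₀, ← h₁, ← h₂]
    grind [vertexClass_add_two_nsmul_succ hk]

lemma fib_zsmul_vertexClass_sub_eq_zero (hn : 2 ≤ n) :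
    (Nat.fib (2 * n) : ℤ) • (vertexClass n 1 - vertexClass n 0) = 0 := by
  obtain ⟨k, rfl⟩ := Nat.exists_eq_add_of_le' hn
  have hlast : 2 • vertexClass (k + 2) (k + 2) =
      vertexClass (k + 2) k + vertexClass (k + 2) (k + 1) := two_nsmul_vertexClass_last hn
  rw [fib_two_mul_eq_signedFibSq, mul_smul, sub_smul, sub_smul, mul_smul]
  simp only [← vertexClass_sub_zero hn, le_refl, Nat.le_add_right, Nat.add_le_add_iff_left,
    Nat.one_le_ofNat]
  convert smul_zero _
  grind

lemma stripClass_eq_zero_of_dvd (hn : 2 ≤ n) {d : ℕ → ℤ} (hd : ∑ k ∈ range (n + 1), d k = 0)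
    (hdvd : (Nat.fib (2 * n) : ℤ) ∣
      ∑ k ∈ range (n + 1), d k * (Nat.fib k * Nat.fib (2 * n - k))) :
    stripClass n d = 0 := by
  have hmod : ∑ k ∈ range (n + 1), d k * (Nat.fib k * Nat.fib (2 * n - k) : ℤ) ≡
      Int.fib ((2 * n : ℕ) - 1) * ∑ k ∈ range (n + 1), d k * signedFibSq k
        [ZMOD Nat.fib (2 * n)] := by
    rw [mul_sum]
    refine Int.ModEq.sum fun k hk => ?_
    rw [mul_left_comm _ (d k)]
    exact (fib_mul_fib_sub_modEq (by grind)).mul_left (d k)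
  obtain ⟨t, ht⟩ : (Nat.fib (2 * n) : ℤ) ∣ ∑ k ∈ range (n + 1), d k * signedFibSq k :=
    (isCoprime_fib_fib_sub_one (2 * n : ℕ)).dvd_of_dvd_mul_left (hmod.dvd_iff.1 hdvd)
  calc stripClass n d
      = ∑ k ∈ range (n + 1), d k • (vertexClass n k - vertexClass n 0) := by
        simp only [stripClass_eq_sum, smul_sub, sum_sub_distrib, ← sum_smul, hd, zero_smul,
          sub_zero]
    _ = (∑ k ∈ range (n + 1), d k * signedFibSq k) • (vertexClass n 1 - vertexClass n 0) := by
        rw [sum_smul]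
        refine sum_congr rfl fun k hk => ?_
        rw [vertexClass_sub_zero hn (by grind), mul_smul]
    _ = 0 := by rw [ht, mul_comm, mul_smul, fib_zsmul_vertexClass_sub_eq_zero hn, smul_zero]

lemma stripClass_eq_of_sum_eq (hn : 2 ≤ n) {d e : ℕ → ℤ}
    (hdeg : ∑ k ∈ range (n + 1), d k = ∑ k ∈ range (n + 1), e k)
    (hres : ∑ k ∈ range (n + 1), d k • fibResidue n k =
      ∑ k ∈ range (n + 1), e k • fibResidue n k) :
    stripClass n d = stripClass n e := by
  rw [← sub_eq_zero, ← map_sub]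
  apply stripClass_eq_zero_of_dvd hn
  · simpa [sub_eq_zero] using hdeg
  · rw [← ZMod.intCast_zmod_eq_zero_iff_dvd]
    simpa [fibResidue, sub_mul, sub_eq_zero, zsmul_eq_mul] using hres

lemma stripClass_chips_eq_of_add_eq (hn : 2 ≤ n) {p q r i j k : ℕ} (hp : p ≤ n) (hq : q ≤ n)
    (hr : r ≤ n) (hi : i ≤ n) (hj : j ≤ n) (hk : k ≤ n)
    (h : fibResidue n p + fibResidue n q + fibResidue n r =
      fibResidue n i + fibResidue n j + fibResidue n k) :
    stripClass n (chips p q r) = stripClass n (chips i j k) := by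
  apply stripClass_eq_of_sum_eq hn
  · simpa using (sum_chips_smul (fun _ => (1 : ℤ)) hp hq hr).trans
      (sum_chips_smul (fun _ => (1 : ℤ)) hi hj hk).symm
  · rwa [sum_chips_smul _ hp hq hr, sum_chips_smul _ hi hj hk]

end FibResidue

theorem strip_gonality_ge_four (n : ℕ) (hn : 6 ≤ n) :
    ¬ ∃ D ∈ {y : ZMod (Nat.fib (2 * n)) |
        ∃ a ∈ {z : ZMod (Nat.fib (2 * n)) | ∃ k ≤ n, z = (Nat.fib k * Nat.fib (2 * n - k) : ℕ)},
        ∃ b ∈ {z : ZMod (Nat.fib (2 * n)) | ∃ k ≤ n, z = (Nat.fib k * Nat.fib (2 * n - k) : ℕ)},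
          y = a + b},
      ∀ x ∈ {z : ZMod (Nat.fib (2 * n)) | ∃ k ≤ n, z = (Nat.fib k * Nat.fib (2 * n - k) : ℕ)},
        D - x ∈ {y : ZMod (Nat.fib (2 * n)) |
          ∃ a ∈ {z : ZMod (Nat.fib (2 * n)) | ∃ k ≤ n, z = (Nat.fib k * Nat.fib (2 * n - k) : ℕ)},
          ∃ b ∈ {z : ZMod (Nat.fib (2 * n)) | ∃ k ≤ n, z = (Nat.fib k * Nat.fib (2 * n - k) : ℕ)},
            y = a + b} := by
  rintro ⟨D, ⟨_, ⟨p, hp, rfl⟩, _, ⟨q, hq, rfl⟩, rfl⟩, h⟩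
  refine not_hasPositiveRank_chips_zero hn p q fun v => ?_
  obtain ⟨_, ⟨i, hi, rfl⟩, _, ⟨j, hj, rfl⟩, hij⟩ := h _ ⟨v, v.is_le, rfl⟩
  have hij : fibResidue n p + fibResidue n q - fibResidue n v =
    fibResidue n i + fibResidue n j := hij
  refine ⟨LinearMap.funLeft ℤ ℤ Fin.val (chips v i j), fun _ => chips_nonneg _ _ _ _, ?_, ?_⟩
  · rw [LinearMap.funLeft_apply, chips_apply, if_pos rfl]
    positivity
  · refine stripClass_chips_eq_of_add_eq (by omega) v.is_le hi hj (Nat.zero_le n) hp hq ?_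
    rw [add_assoc, ← hij, fibResidue_zero, add_sub_cancel, zero_add]
end
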